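/- arXiv:2104.04094 — 2 statements merged into one kernel-verified Lean document; each statement's English description precedes it below -/
import Mathlib

section
/- Let 𝒜 be an abelian category admitting Ext-groups, and let 0 → F →^f G →^π E → 0 be a short exact sequence in 𝒜. Assume Hom(G,F) = 0, Ext¹(G,F) = 0, Ext¹(G,G) = 0, and that precomposition with f gives an isomorphism Hom(G,G) → Hom(F,G). Then the connecting homomorphism δ : Hom(F,F) → Ext¹(E,F) associated to the short exact sequence (arising from the long exact sequence for Hom(−,F)) is an isomorphism of abelian groups, and Hom(E,G) = 0 and Ext¹(E,G) = 0. -/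
open CategoryTheory CategoryTheory.Abelian

universe w v u

/-- for a short exact sequence `0 → F → G → E → 0` with
`Hom(G,F) = 0`, `Ext¹(G,F) = 0`, `Ext¹(G,G) = 0` and such that precomposition
with `f` is an isomorphism `Hom(G,G) ≅ Hom(F,G)`, the connecting homomorphism
`δ : Hom(F,F) → Ext¹(E,F)`, `φ ↦ extClass ∘ φ`, is an isomorphism of abelian
groups, and `Hom(E,G) = 0` and `Ext¹(E,G) = 0`. -/
theorem connecting_iso_and_vanishing
    {C : Type u} [Category.{v} C] [Abelian C] [HasExt.{w} C]
    {F G E : C} (f : F ⟶ G) (π : G ⟶ E) (hw : f ≫ π = 0)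
    (hS : (ShortComplex.mk f π hw).ShortExact)
    (h1 : ∀ φ : G ⟶ F, φ = 0)
    (h2 : Subsingleton (Ext.{w} G F 1))
    (h3 : Subsingleton (Ext.{w} G G 1))
    (h4 : Function.Bijective (fun φ : G ⟶ G => f ≫ φ)) :
    Function.Bijective
      (fun φ : F ⟶ F => hS.extClass.comp (Ext.mk₀ φ) (add_zero 1)) ∧
    (∀ ψ : E ⟶ G, ψ = 0) ∧
    Subsingleton (Ext.{w} E G 1) := by
  have key : ∀ (Y : C) (_ : Subsingleton (Ext.{w} G Y 1)) (x : Ext.{w} E Y 1),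
      ∃ φ : F ⟶ Y, hS.extClass.comp (Ext.mk₀ φ) (add_zero 1) = x := by
    intro Y hY x
    obtain ⟨y, hy⟩ := Ext.contravariant_sequence_exact₃ hS Y x
      (Subsingleton.elim (α := Ext.{w} G Y 1) _ _) (add_zero 1)
    obtain ⟨φ, rfl⟩ := (Ext.mk₀_bijective _ _).2 y
    exact ⟨φ, hy⟩
  refine ⟨⟨?_, ?_⟩, ?_, ?_⟩
  · intro a b hab
    have hz : hS.extClass.comp (Ext.mk₀ (a - b)) (add_zero 1) = 0 := by
      rw [sub_eq_add_neg, Ext.mk₀_add, Ext.mk₀_neg, Ext.comp_add, Ext.comp_neg]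
      simpa [add_neg_eq_zero] using hab
    obtain ⟨y, hy⟩ := Ext.contravariant_sequence_exact₁ hS F (Ext.mk₀ (a - b)) (add_zero 1) hz
    obtain ⟨φ, rfl⟩ := (Ext.mk₀_bijective _ _).2 y
    have hφ : φ = 0 := h1 φ
    rw [hφ, Ext.mk₀_zero, Ext.comp_zero] at hy
    exact sub_eq_zero.1 ((Ext.mk₀_eq_zero_iff _).1 hy.symm)
  · exact fun x => key F h2 x
  · intro ψ
    have : Epi π := hS.epi_g
    have h : π ≫ ψ = 0 := h4.1 (by simp only [← Category.assoc, hw, Limits.zero_comp, Limits.comp_zero])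
    exact (cancel_epi π).1 (by simpa using h)
  · refine subsingleton_of_forall_eq 0 fun x => ?_
    obtain ⟨φ, rfl⟩ := key G h3 x
    obtain ⟨χ, rfl⟩ := h4.2 φ
    dsimp only
    rw [← Ext.mk₀_comp_mk₀]
    exact hS.extClass_comp_assoc _
end

section
/- Let 𝒜 be an abelian category admitting Ext-groups, and let 0 → F →^f G →^π E → 0 be a short exact sequence in 𝒜. Assume Hom(G,F) = 0, Ext¹(G,F) = 0, Ext¹(G,G) = 0, that precomposition with f gives an isomorphism Hom(G,G) → Hom(F,G), and that Ext²(E,F) = 0. Then Ext¹(E,E) = 0 and the connecting homomorphism Hom(E,E) → Ext¹(E,F) (from the long exact sequence for Hom(E,−)) is an isomorphism; in particular End(E) is isomorphic as an abelian group to End(F), so if End(F) ≅ k and Ext¹(F,F) = 0 then E is exceptional (End(E) ≅ k and Ext¹(E,E) = 0). -/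
open CategoryTheory CategoryTheory.Abelian

universe w v u

/-- for a short exact sequence `0 → F → G → E → 0` with
`Hom(G,F) = 0`, `Ext¹(G,F) = 0`, `Ext¹(G,G) = 0`, precomposition with `f` an
isomorphism `Hom(G,G) ≅ Hom(F,G)`, and `Ext²(E,F) = 0`, one has
`Ext¹(E,E) = 0` and the connecting homomorphism
`Hom(E,E) → Ext¹(E,F)`, `φ ↦ φ ∘ extClass`, is an isomorphism; in particular
`End(E) ≅ End(F)` as abelian groups, so if `End(F) ≅ k` and `Ext¹(F,F) = 0`
then `E` is exceptional. -/
theorem middle_term_exceptional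
    {C : Type u} [Category.{v} C] [Abelian C] [HasExt.{w} C]
    (k : Type*) [Field k] [Linear k C]
    {F G E : C} (f : F ⟶ G) (π : G ⟶ E) (hw : f ≫ π = 0)
    (hS : (ShortComplex.mk f π hw).ShortExact)
    (h1 : ∀ φ : G ⟶ F, φ = 0)
    (h2 : Subsingleton (Ext.{w} G F 1))
    (h3 : Subsingleton (Ext.{w} G G 1))
    (h4 : Function.Bijective (fun φ : G ⟶ G => f ≫ φ))
    (h5 : Subsingleton (Ext.{w} E F 2)) :
    Subsingleton (Ext.{w} E E 1) ∧
    Function.Bijective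
      (fun φ : E ⟶ E => (Ext.mk₀ φ).comp hS.extClass (zero_add 1)) ∧
    Nonempty ((E ⟶ E) ≃+ (F ⟶ F)) ∧
    (Function.Bijective (fun a : k => a • (𝟙 F)) →
      Subsingleton (Ext.{w} F F 1) →
      (Function.Bijective (fun a : k => a • (𝟙 E)) ∧ Subsingleton (Ext.{w} E E 1))) := by
  have hepi : Epi π := hS.epi_g
  have homEG : ∀ φ : E ⟶ G, φ = 0 := by
    intro φ
    have : π ≫ φ = 0 := h4.1 (by simp [← Category.assoc, hw])
    rwa [← cancel_epi π, Limits.comp_zero]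
  have extEG : ∀ x : Ext.{w} E G 1, x = 0 := by
    intro x
    obtain ⟨x1, rfl⟩ := Ext.contravariant_sequence_exact₃ hS G x
      (h3.elim _ _) (n₀ := 0) rfl
    obtain ⟨g, rfl⟩ := Ext.addEquiv₀.symm.surjective x1
    obtain ⟨ψ, rfl⟩ := h4.2 g
    have := hS.extClass_comp_assoc (Ext.mk₀ ψ) (h := rfl)
    simpa using this
  have extEE : Subsingleton (Ext.{w} E E 1) := by
    refine subsingleton_of_forall_eq 0 fun x => ?_
    obtain ⟨y, rfl⟩ := Ext.covariant_sequence_exact₃ E hS x (n₁ := 2) rfl (h5.elim _ _)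
    rw [extEG y, Ext.zero_comp]
  let α : (E ⟶ E) →+ Ext.{w} E F 1 :=
    { toFun := fun φ => (Ext.mk₀ φ).comp hS.extClass (zero_add 1)
      map_zero' := by simp
      map_add' := by intro a b; simp [Ext.mk₀_add, Ext.add_comp] }
  let β : (F ⟶ F) →+ Ext.{w} E F 1 :=
    { toFun := fun φ => hS.extClass.comp (Ext.mk₀ φ) (add_zero 1)
      map_zero' := by simp
      map_add' := by intro a b; simp [Ext.mk₀_add, Ext.comp_add] }
  have hα : Function.Bijective α := by
    constructor
    · refine (injective_iff_map_eq_zero α).2 fun φ hφ => ?_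
      obtain ⟨y, hy⟩ := Ext.covariant_sequence_exact₃ E hS (Ext.mk₀ φ) (zero_add 1) hφ
      obtain ⟨g, rfl⟩ := Ext.addEquiv₀.symm.surjective y
      rw [homEG g, map_zero, Ext.zero_comp] at hy
      exact (Ext.mk₀_eq_zero_iff φ).1 hy.symm
    · intro x
      obtain ⟨y, hy⟩ := Ext.covariant_sequence_exact₁ E hS x (extEG _) (zero_add 1)
      obtain ⟨g, rfl⟩ := Ext.addEquiv₀.symm.surjective y
      exact ⟨g, hy⟩
  have hβ : Function.Bijective β := by
    constructor
    · refine (injective_iff_map_eq_zero β).2 fun φ hφ => ?_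
      obtain ⟨y, hy⟩ := Ext.contravariant_sequence_exact₁ hS F (Ext.mk₀ φ) (add_zero 1) hφ
      obtain ⟨g, rfl⟩ := Ext.addEquiv₀.symm.surjective y
      rw [h1 g, map_zero, Ext.comp_zero] at hy
      exact (Ext.mk₀_eq_zero_iff φ).1 hy.symm
    · intro x
      obtain ⟨y, hy⟩ := Ext.contravariant_sequence_exact₃ hS F x (h2.elim _ _) (add_zero 1)
      obtain ⟨g, rfl⟩ := Ext.addEquiv₀.symm.surjective y
      exact ⟨g, hy⟩
  refine ⟨extEE, hα, ⟨(AddEquiv.ofBijective α hα).trans (AddEquiv.ofBijective β hβ).symm⟩,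
    fun hk _ => ⟨?_, extEE⟩⟩
  rw [← Function.Bijective.of_comp_iff' hα]
  convert hβ.comp hk using 1
  funext a
  change (Ext.mk₀ (a • 𝟙 E)).comp hS.extClass (zero_add 1) =
    hS.extClass.comp (Ext.mk₀ (a • 𝟙 F)) (add_zero 1)
  rw [Ext.mk₀_smul, Ext.mk₀_smul, Ext.smul_comp, Ext.comp_smul]
  erw [Ext.mk₀_id_comp, Ext.comp_mk₀_id]
end
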